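/- Let u be a bounded function on ℂ that is a difference of two subharmonic functions, with distributional Laplacian Δu = μ - m, where μ is a non-negative locally finite measure and m is the Lebesgue (area) measure. Then there is an absolute constant C such that for every bounded Borel set E ⊆ ℂ, μ(E) ≤ m(E_{+t}) and m(E) ≤ μ(E_{+t}), where t = C·‖u‖_∞^{1/2} and E_{+t} = {z : dist(z,E) ≤ t}. -/

import Mathlib

/-!
Fix a mollifier `g` supported in the disc of radius `s` and put `φ = 1_Z ⋆ g`. Testing `Δu = μ - m`
against `φ` gives `|∫ φ dμ - m(Z)| ≤ ‖u‖_∞ ‖1_Z ⋆ Δg‖₁`. Since `∫ Δg = 0`, near `Z` the indicator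
of `Z` may be replaced by minus that of its complement, so `‖1_Z ⋆ Δg‖₁ ≤ m(A) ‖Δg‖₁` for a layer
`A` of width `2s` lying on either side of the boundary of `Z`, at our choice. By scaling
`‖Δg‖₁ = K / s²`, so once `s² ≥ K ‖u‖_∞` the error is at most `m(A)`: with the outer layer it turns
`m(Z)` into the measure of a neighbourhood of `Z`, and with the inner layer into the measure of a
set whose `2s`-neighbourhood is `Z`. As `1_E ≤ φ ≤ 1_{Z_{+s}}` whenever `E_{+s} ⊆ Z`, both
inequalities follow.
-/

open MeasureTheory Metric Complex

/-- The classical Laplacian of a function `φ : ℂ → ℝ` (sum of the second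
derivatives in the directions `1` and `i`). -/
noncomputable def laplacian (φ : ℂ → ℝ) (z : ℂ) : ℝ :=
  fderiv ℝ (fun w => fderiv ℝ φ w 1) z 1 +
    fderiv ℝ (fun w => fderiv ℝ φ w Complex.I) z Complex.I

/-- A real-valued function is subharmonic on a set `G` if it is upper
semicontinuous there and satisfies the sub-mean-value inequality on every
closed disc contained in `G`. -/
def SubharmonicOn (v : ℂ → ℝ) (G : Set ℂ) : Prop :=
  UpperSemicontinuousOn v G ∧
    ∀ z ∈ G, ∀ r : ℝ, 0 < r → closedBall z r ⊆ G →
      v z ≤ (2 * Real.pi)⁻¹ *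
        ∫ θ in (0 : ℝ)..(2 * Real.pi), v (z + r * Complex.exp (θ * Complex.I))

open Set Function Filter Topology Module
open ContinuousLinearMap (lsmul)
open scoped Convolution ContDiff ENNReal

section Thickening

variable {X : Type*} [PseudoMetricSpace X] [MeasurableSpace X] {μ ν : Measure X} {t : ℝ}

theorem le_measure_cthickening_of_forall_gt [ProperSpace X] [OpensMeasurableSpace X]
    [IsFiniteMeasureOnCompacts ν] {E : Set X} (hE : Bornology.IsBounded E) {a : ℝ≥0∞}
    (h : ∀ r > t, a ≤ ν (cthickening r E)) : a ≤ ν (cthickening t E) := by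
  have hlim : Tendsto (fun r ↦ ν (cthickening r E)) (𝓝[>] t) (𝓝 (ν (cthickening t E))) := by
    rw [cthickening_eq_iInter_cthickening]
    exact tendsto_measure_biInter_gt (fun r _ ↦ isClosed_cthickening.nullMeasurableSet)
      (fun _ _ _ hrs ↦ cthickening_mono hrs E)
      ⟨t + 1, lt_add_one t, hE.cthickening.measure_lt_top.ne⟩
  exact ge_of_tendsto hlim (eventually_mem_nhdsWithin.mono h)

theorem measure_le_cthickening_of_forall_isCompact [SigmaCompactSpace X]
    (h : ∀ K, IsCompact K → μ K ≤ ν (cthickening t K)) (E : Set X) :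
    μ E ≤ ν (cthickening t E) := by
  have hmono : Monotone fun n ↦ closure E ∩ compactCovering X n := fun _ _ hmn ↦
    inter_subset_inter_right _ (compactCovering_subset X hmn)
  calc μ E ≤ μ (⋃ n, closure E ∩ compactCovering X n) := by
        rw [← inter_iUnion, iUnion_compactCovering, inter_univ]
        exact measure_mono subset_closure
    _ = ⨆ n, μ (closure E ∩ compactCovering X n) := hmono.measure_iUnion
    _ ≤ ν (cthickening t E) := iSup_le fun n ↦
        (h _ ((isCompact_compactCovering X n).inter_left isClosed_closure)).trans <| by
          rw [← cthickening_closure (s := E)]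
          exact measure_mono (cthickening_subset_of_subset t inter_subset_left)

end Thickening

section Convolution

variable {G : Type*} [NormedAddCommGroup G] {f F h : G → ℝ} {X Y Z : Set G} {s : ℝ} {x : G}

theorem dist_le_of_apply_sub_ne_zero (hh : support h ⊆ closedBall 0 s) {t : G}
    (ht : h (x - t) ≠ 0) : dist t x ≤ s := by
  simpa [dist_eq_norm, norm_sub_rev] using hh ht

variable [MeasurableSpace G] {ν : Measure G}

theorem locallyIntegrable_indicator_one [IsLocallyFiniteMeasure ν] (hZ : MeasurableSet Z) :
    LocallyIntegrable (Z.indicator (1 : G → ℝ)) ν :=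
  (locallyIntegrable_const (1 : ℝ)).indicator hZ

variable [BorelSpace G]

theorem convolution_eq_of_eqOn_closedBall [ν.IsAddLeftInvariant] [ν.IsNegInvariant]
    (hh : support h ⊆ closedBall 0 s) {c : ℝ} (hf : ∀ t ∈ closedBall x s, f t = c) :
    (f ⋆[lsmul ℝ ℝ, ν] h) x = c * ∫ t, h t ∂ν := by
  rw [convolution_lsmul, ← integral_sub_left_eq_self h ν x, ← integral_const_mul]
  congr 1 with t
  by_cases ht : h (x - t) = 0
  · simp [ht]
  · rw [smul_eq_mul, hf t (dist_le_of_apply_sub_ne_zero hh ht)]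

theorem abs_convolution_le_of_integral_eq_zero [ProperSpace G] [ν.IsAddLeftInvariant]
    [ν.IsNegInvariant] [IsFiniteMeasureOnCompacts ν] (hf : LocallyIntegrable f ν)
    (hF : LocallyIntegrable F ν) (hh : Continuous h) (hsupp : support h ⊆ closedBall 0 s)
    (h_zero : ∫ t, h t ∂ν = 0) {c : ℝ} (hfF : ∀ t ∈ closedBall x s, |f t - c| ≤ F t) :
    |(f ⋆[lsmul ℝ ℝ, ν] h) x| ≤ (F ⋆[lsmul ℝ ℝ, ν] (|h ·|)) x := by
  have hcomp : HasCompactSupport h :=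
    HasCompactSupport.of_support_subset_isCompact (isCompact_closedBall 0 s) hsupp
  have hrecenter : (f ⋆[lsmul ℝ ℝ, ν] h) x = ∫ t, (f t - c) * h (x - t) ∂ν := by
    simp_rw [sub_mul]
    rw [integral_sub, integral_const_mul, integral_sub_left_eq_self h ν x, h_zero, mul_zero,
      sub_zero]
    · rfl
    · exact hcomp.convolutionExists_right (lsmul ℝ ℝ) hf hh x
    · exact ((hh.integrable_of_hasCompactSupport hcomp).comp_sub_left x).const_mul c
  have hdom : ConvolutionExistsAt F (|h ·|) x (lsmul ℝ ℝ) ν :=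
    (hcomp.comp_left (g := abs) abs_zero).convolutionExists_right _ hF hh.abs x
  rw [hrecenter, ← Real.norm_eq_abs]
  refine norm_integral_le_of_norm_le hdom (.of_forall fun t ↦ ?_)
  by_cases ht : h (x - t) = 0
  · simp [ht]
  · rw [norm_mul]
    exact mul_le_mul_of_nonneg_right (hfF t (dist_le_of_apply_sub_ne_zero hsupp ht)) (abs_nonneg _)

theorem abs_indicator_convolution_le [ProperSpace G] [ν.IsAddLeftInvariant] [ν.IsNegInvariant]
    [IsFiniteMeasureOnCompacts ν] (hX : MeasurableSet X) (hY : MeasurableSet Y)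
    (hZ : MeasurableSet Z) (hXZ : X ⊆ Z) (hZY : Z ⊆ Y) (hXY : cthickening (2 * s) X ⊆ Y)
    (hh : Continuous h) (hsupp : support h ⊆ closedBall 0 s) (h_zero : ∫ t, h t ∂ν = 0) (x : G) :
    |(Z.indicator 1 ⋆[lsmul ℝ ℝ, ν] h) x| ≤
      ((Y \ X).indicator 1 ⋆[lsmul ℝ ℝ, ν] (|h ·|)) x := by
  have hle (c : ℝ) := abs_convolution_le_of_integral_eq_zero (x := x) (c := c)
    (locallyIntegrable_indicator_one hZ) (locallyIntegrable_indicator_one (hY.diff hX))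
    hh hsupp h_zero
  by_cases hx : ∃ p ∈ X, dist x p ≤ s
  · obtain ⟨p, hp, hxp⟩ := hx
    refine hle 1 fun t ht ↦ ?_
    have htY : t ∈ Y := hXY <| mem_cthickening_of_dist_le t p _ X hp <| by
      linarith [dist_triangle t x p, mem_closedBall.1 ht]
    by_cases htZ : t ∈ Z
    · simp [htZ, indicator_nonneg]
    · simp [htZ, htY, mt (@hXZ t) htZ]
  · push Not at hx
    refine hle 0 fun t ht ↦ ?_
    have htX : t ∉ X := fun h ↦ (hx t h).not_ge (mem_closedBall'.1 ht)
    by_cases htZ : t ∈ Z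
    · simp [htZ, hZY htZ, htX]
    · simp [htZ, indicator_nonneg]

theorem integral_abs_indicator_convolution_le [ProperSpace G] [ν.IsAddHaarMeasure]
    (hX : MeasurableSet X) (hY : MeasurableSet Y) (hZ : MeasurableSet Z)
    (hXZ : X ⊆ Z) (hZY : Z ⊆ Y) (hXY : cthickening (2 * s) X ⊆ Y) (hYb : Bornology.IsBounded Y)
    (hh : Continuous h) (hsupp : support h ⊆ closedBall 0 s) (h_zero : ∫ t, h t ∂ν = 0) :
    ∫ x, |(Z.indicator 1 ⋆[lsmul ℝ ℝ, ν] h) x| ∂ν ≤ ν.real (Y \ X) * ∫ t, |h t| ∂ν := by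
  have hD : Integrable ((Y \ X).indicator (1 : G → ℝ)) ν :=
    (integrable_indicator_iff (hY.diff hX)).2
      (integrableOn_const (hYb.subset sdiff_subset).measure_lt_top.ne)
  have hh_int : Integrable (|h ·|) ν := (hh.integrable_of_hasCompactSupport
    (.of_support_subset_isCompact (isCompact_closedBall 0 s) hsupp)).abs
  calc ∫ x, |(Z.indicator 1 ⋆[lsmul ℝ ℝ, ν] h) x| ∂ν
      ≤ ∫ x, ((Y \ X).indicator 1 ⋆[lsmul ℝ ℝ, ν] (|h ·|)) x ∂ν :=
        integral_mono_of_nonneg (.of_forall fun _ ↦ abs_nonneg _)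
          (hD.integrable_convolution _ hh_int)
          (.of_forall (abs_indicator_convolution_le hX hY hZ hXZ hZY hXY hh hsupp h_zero))
    _ = ν.real (Y \ X) * ∫ t, |h t| ∂ν := by
        rw [integral_convolution _ hD hh_int, integral_indicator_one (hY.diff hX)]
        rfl

end Convolution

section Derivative

variable {G : Type*} [NormedAddCommGroup G] [NormedSpace ℝ G] {f g : G → ℝ}

theorem contDiff_fderiv_apply (hg : ContDiff ℝ ∞ g) (v : G) :
    ContDiff ℝ ∞ fun x ↦ fderiv ℝ g x v :=
  (hg.fderiv_right (by norm_cast)).clm_apply contDiff_const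

theorem fderiv_const_mul_apply (a : ℝ) (g : G → ℝ) (x v : G) :
    fderiv ℝ (fun y ↦ a * g y) x v = a * fderiv ℝ g x v :=
  DFunLike.congr_fun (congrFun (fderiv_const_smul_field (𝕜 := ℝ) (f := g) a) x) v

theorem fderiv_comp_smul_apply (c : ℝ) (g : G → ℝ) (x v : G) :
    fderiv ℝ (fun y ↦ g (c • y)) x v = c * fderiv ℝ g (c • x) v :=
  DFunLike.congr_fun (fderiv_comp_smul (f := g) c) v

variable [MeasurableSpace G] [BorelSpace G] {ν : Measure G}

theorem fderiv_convolution_apply [FiniteDimensional ℝ G] [IsFiniteMeasureOnCompacts ν]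
    [ν.IsAddLeftInvariant]
    (hf : LocallyIntegrable f ν) (hg : ContDiff ℝ 1 g) (hg' : HasCompactSupport g) (x v : G) :
    fderiv ℝ (f ⋆[lsmul ℝ ℝ, ν] g) x v = (f ⋆[lsmul ℝ ℝ, ν] fun y ↦ fderiv ℝ g y v) x := by
  have hderiv := hg'.hasFDerivAt_convolution_right (lsmul ℝ ℝ) hf hg x
  rw [hderiv.fderiv]
  exact convolution_precompR_apply _ hf (hg'.fderiv ℝ) (hg.continuous_fderiv one_ne_zero) x v

theorem integral_fderiv_apply_eq_zero [FiniteDimensional ℝ G] [ν.IsAddHaarMeasure]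
    (hg : ContDiff ℝ 1 g) (hg' : HasCompactSupport g) (v : G) : ∫ x, fderiv ℝ g x v ∂ν = 0 := by
  have hint : Integrable g ν := hg.continuous.integrable_of_hasCompactSupport hg'
  have hint' : Integrable (fun x ↦ fderiv ℝ g x v) ν :=
    ((hg.continuous_fderiv one_ne_zero).clm_apply continuous_const).integrable_of_hasCompactSupport
      (hg'.fderiv_apply (𝕜 := ℝ) v)
  simpa using integral_mul_fderiv_eq_neg_fderiv_mul_of_integrable (μ := ν) (f := fun _ ↦ (1 : ℝ))
    (g := g) (v := v) (by simp) (by simpa using hint') (by simpa using hint)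
    (fun _ _ ↦ differentiableAt_const _) fun _ _ ↦ hg.differentiable one_ne_zero _

end Derivative

section Laplacian

variable {f g : ℂ → ℝ}

theorem contDiff_laplacian (hg : ContDiff ℝ ∞ g) : ContDiff ℝ ∞ (laplacian g) :=
  (contDiff_fderiv_apply (contDiff_fderiv_apply hg 1) 1).add
    (contDiff_fderiv_apply (contDiff_fderiv_apply hg I) I)

theorem support_laplacian_subset : support (laplacian g) ⊆ tsupport g := by
  have hsecond (v : ℂ) : support (fun z ↦ fderiv ℝ (fun w ↦ fderiv ℝ g w v) z v) ⊆ tsupport g :=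
    (subset_tsupport _).trans <|
      (tsupport_fderiv_apply_subset ℝ v).trans (tsupport_fderiv_apply_subset ℝ v)
  exact (support_add _ _).trans (union_subset (hsecond 1) (hsecond I))

theorem laplacian_const_mul (a : ℝ) (g : ℂ → ℝ) (z : ℂ) :
    laplacian (fun w ↦ a * g w) z = a * laplacian g z := by
  simp only [laplacian, fderiv_const_mul_apply, mul_add]

theorem laplacian_comp_smul (c : ℝ) (g : ℂ → ℝ) (z : ℂ) :
    laplacian (fun w ↦ g (c • w)) z = c ^ 2 * laplacian g (c • z) := by
  simp only [laplacian, fderiv_comp_smul_apply, fderiv_const_mul_apply]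
  rw [fderiv_comp_smul_apply c fun w ↦ fderiv ℝ g w 1,
    fderiv_comp_smul_apply c fun w ↦ fderiv ℝ g w I]
  ring

theorem laplacian_convolution (hf : LocallyIntegrable f) (hg : ContDiff ℝ ∞ g)
    (hg' : HasCompactSupport g) : laplacian (f ⋆ g) = f ⋆ laplacian g := by
  have hsecond (v z : ℂ) : fderiv ℝ (fun w ↦ fderiv ℝ (f ⋆ g) w v) z v =
      (f ⋆ fun w ↦ fderiv ℝ (fun w ↦ fderiv ℝ g w v) w v) z := by
    simp_rw [fderiv_convolution_apply hf (hg.of_le (by norm_cast)) hg']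
    exact fderiv_convolution_apply hf ((contDiff_fderiv_apply hg v).of_le (by norm_cast))
      (hg'.fderiv_apply (𝕜 := ℝ) v) z v
  have hexists (v : ℂ) : ConvolutionExists f (fun z ↦ fderiv ℝ (fun w ↦ fderiv ℝ g w v) z v)
      (lsmul ℝ ℝ) :=
    ((hg'.fderiv_apply (𝕜 := ℝ) v).fderiv_apply (𝕜 := ℝ) v).convolutionExists_right _ hf
      (contDiff_fderiv_apply (contDiff_fderiv_apply hg v) v).continuous
  ext z
  rw [laplacian, hsecond, hsecond]
  exact congrFun ((hexists 1).distrib_add (hexists I)).symm z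

theorem integral_laplacian_eq_zero (hg : ContDiff ℝ ∞ g) (hg' : HasCompactSupport g) :
    ∫ z, laplacian g z = 0 := by
  have hsecond (v : ℂ) : ∫ z, fderiv ℝ (fun w ↦ fderiv ℝ g w v) z v = 0 :=
    integral_fderiv_apply_eq_zero ((contDiff_fderiv_apply hg v).of_le (by norm_cast))
      (hg'.fderiv_apply (𝕜 := ℝ) v) v
  have hint (v : ℂ) : Integrable fun z ↦ fderiv ℝ (fun w ↦ fderiv ℝ g w v) z v :=
    (contDiff_fderiv_apply
      (contDiff_fderiv_apply hg v) v).continuous.integrable_of_hasCompactSupport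
      ((hg'.fderiv_apply (𝕜 := ℝ) v).fderiv_apply (𝕜 := ℝ) v)
  simp_rw [laplacian]
  rw [integral_add (hint 1) (hint I), hsecond, hsecond, add_zero]

end Laplacian

section Mollifier

variable {G : Type*} [NormedAddCommGroup G] [NormedSpace ℝ G] [MeasurableSpace G]

/-- A smooth probability density with respect to `ν`, supported in the closed ball of radius `s`
around the origin. -/
structure IsMollifier (ν : Measure G) (g : G → ℝ) (s : ℝ) : Prop where
  contDiff : ContDiff ℝ ∞ g
  nonneg : ∀ x, 0 ≤ g x
  integral_eq_one : ∫ x, g x ∂ν = 1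
  support_subset : support g ⊆ closedBall 0 s

/-- The dilation of `g` by the factor `c`, normalised so as to preserve the integral. -/
noncomputable def rescale (c : ℝ) (g : G → ℝ) (x : G) : ℝ :=
  (c ^ finrank ℝ G)⁻¹ * g (c⁻¹ • x)

variable {ν : Measure G} {g : G → ℝ} {s : ℝ} {x : G} {Z : Set G}

namespace IsMollifier

theorem hasCompactSupport [FiniteDimensional ℝ G] (hg : IsMollifier ν g s) : HasCompactSupport g :=
  .of_support_subset_isCompact (isCompact_closedBall 0 s) hg.support_subset

theorem radius_nonneg (hg : IsMollifier ν g s) : 0 ≤ s := by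
  obtain ⟨x, hx⟩ := exists_ne_zero_of_integral_ne_zero (hg.integral_eq_one.trans_ne one_ne_zero)
  exact nonempty_closedBall.1 ⟨x, hg.support_subset hx⟩

theorem indicator_convolution_nonneg (hg : IsMollifier ν g s) (Z : Set G) (x : G) :
    0 ≤ (Z.indicator 1 ⋆[lsmul ℝ ℝ, ν] g) x :=
  integral_nonneg fun _ ↦ mul_nonneg (indicator_nonneg (fun _ _ ↦ zero_le_one) _) (hg.nonneg _)

end IsMollifier

variable [BorelSpace G] [FiniteDimensional ℝ G]

theorem exists_isMollifier_one (ν : Measure G) [IsLocallyFiniteMeasure ν] [ν.IsOpenPosMeasure] :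
    ∃ g, IsMollifier ν g 1 :=
  let b : ContDiffBump (0 : G) := ⟨1 / 2, 1, by norm_num, by norm_num⟩
  ⟨b.normed ν, b.contDiff_normed, b.nonneg_normed, b.integral_normed,
    b.support_normed_eq.trans_subset ball_subset_closedBall⟩

theorem integral_rescale [ν.IsAddHaarMeasure] (g : G → ℝ) {c : ℝ} (hc : 0 < c) :
    ∫ x, rescale c g x ∂ν = ∫ x, g x ∂ν := by
  simp only [rescale]
  rw [integral_const_mul, Measure.integral_comp_inv_smul_of_nonneg ν g hc.le, smul_eq_mul,
    inv_mul_cancel_left₀ (by positivity)]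

namespace IsMollifier

theorem rescale [ν.IsAddHaarMeasure] (hg : IsMollifier ν g s) {c : ℝ} (hc : 0 < c) :
    IsMollifier ν (rescale c g) (c * s) where
  contDiff := contDiff_const.mul (hg.contDiff.comp (contDiff_const_smul c⁻¹))
  nonneg x := mul_nonneg (by positivity) (hg.nonneg _)
  integral_eq_one := (integral_rescale g hc).trans hg.integral_eq_one
  support_subset x hx := by
    have hx' := hg.support_subset (right_ne_zero_of_mul hx)
    rwa [mem_closedBall_zero_iff, norm_smul, norm_inv, Real.norm_of_nonneg hc.le,
      inv_mul_le_iff₀ hc, ← mem_closedBall_zero_iff] at hx'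

variable [ν.IsAddHaarMeasure]

theorem integrable (hg : IsMollifier ν g s) : Integrable g ν :=
  hg.contDiff.continuous.integrable_of_hasCompactSupport hg.hasCompactSupport

theorem contDiff_indicator_convolution (hg : IsMollifier ν g s) (hZ : MeasurableSet Z) :
    ContDiff ℝ ∞ (Z.indicator 1 ⋆[lsmul ℝ ℝ, ν] g) :=
  hg.hasCompactSupport.contDiff_convolution_right _ (locallyIntegrable_indicator_one hZ) hg.contDiff

theorem indicator_convolution_le_one (hg : IsMollifier ν g s) (hZ : MeasurableSet Z) (x : G) :
    (Z.indicator 1 ⋆[lsmul ℝ ℝ, ν] g) x ≤ 1 := by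
  rw [← hg.integral_eq_one, ← integral_sub_left_eq_self g ν x]
  refine integral_mono (hg.hasCompactSupport.convolutionExists_right _
    (locallyIntegrable_indicator_one hZ) hg.contDiff.continuous x)
    (hg.integrable.comp_sub_left x) fun t ↦ ?_
  exact mul_le_of_le_one_left (hg.nonneg _) (indicator_le_self' (fun _ _ ↦ zero_le_one) t)

theorem indicator_convolution_eq_one (hg : IsMollifier ν g s) (hx : closedBall x s ⊆ Z) :
    (Z.indicator 1 ⋆[lsmul ℝ ℝ, ν] g) x = 1 := by
  have hone (t : G) (ht : t ∈ closedBall x s) : Z.indicator (1 : G → ℝ) t = 1 :=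
    indicator_of_mem (hx ht) 1
  rw [convolution_eq_of_eqOn_closedBall hg.support_subset hone, hg.integral_eq_one, one_mul]

theorem indicator_convolution_eq_zero (hg : IsMollifier ν g s) (hx : x ∉ cthickening s Z) :
    (Z.indicator 1 ⋆[lsmul ℝ ℝ, ν] g) x = 0 := by
  have hzero (t : G) (ht : t ∈ closedBall x s) : Z.indicator (1 : G → ℝ) t = 0 :=
    indicator_of_notMem
      (fun htZ ↦ hx (mem_cthickening_of_dist_le x t s Z htZ (mem_closedBall'.1 ht))) 1
  rw [convolution_eq_of_eqOn_closedBall hg.support_subset hzero, zero_mul]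

theorem hasCompactSupport_indicator_convolution (hg : IsMollifier ν g s)
    (hZ : Bornology.IsBounded Z) : HasCompactSupport (Z.indicator 1 ⋆[lsmul ℝ ℝ, ν] g) :=
  .intro (isCompact_of_isClosed_isBounded isClosed_cthickening hZ.cthickening)
    fun _ ↦ hg.indicator_convolution_eq_zero

theorem integral_indicator_convolution (hg : IsMollifier ν g s) (hZ : MeasurableSet Z)
    (hZb : Bornology.IsBounded Z) : ∫ x, (Z.indicator 1 ⋆[lsmul ℝ ℝ, ν] g) x ∂ν = ν.real Z := by
  rw [integral_convolution _ ((integrable_indicator_iff hZ).2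
    (integrableOn_const hZb.measure_lt_top.ne)) hg.integrable, integral_indicator_one hZ,
    hg.integral_eq_one]
  exact mul_one _

theorem measure_le_integral_indicator_convolution {μ : Measure G} [IsFiniteMeasureOnCompacts μ]
    (hg : IsMollifier ν g s) (hZ : MeasurableSet Z) (hZb : Bornology.IsBounded Z) {E : Set G}
    (hEZ : cthickening s E ⊆ Z) :
    μ E ≤ ENNReal.ofReal (∫ x, (Z.indicator 1 ⋆[lsmul ℝ ℝ, ν] g) x ∂μ) :=
  ((hg.contDiff_indicator_convolution hZ).continuous.integrable_of_hasCompactSupport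
    (hg.hasCompactSupport_indicator_convolution hZb)).measure_le_integral
    (.of_forall (hg.indicator_convolution_nonneg Z)) fun _ hx ↦
      (hg.indicator_convolution_eq_one ((closedBall_subset_cthickening hx s).trans hEZ)).ge

theorem integral_indicator_convolution_le_measure (μ : Measure G) (hg : IsMollifier ν g s)
    (hZ : MeasurableSet Z) :
    ENNReal.ofReal (∫ x, (Z.indicator 1 ⋆[lsmul ℝ ℝ, ν] g) x ∂μ) ≤ μ (cthickening s Z) :=
  integral_le_measure (fun x _ ↦ hg.indicator_convolution_le_one hZ x) fun _ hx ↦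
    (hg.indicator_convolution_eq_zero hx).le

end IsMollifier

theorem integral_abs_laplacian_rescale (g : ℂ → ℝ) {c : ℝ} (hc : 0 < c) :
    ∫ z, |laplacian (rescale c g) z| = (∫ z, |laplacian g z|) / c ^ 2 := by
  have hlaplacian (z : ℂ) :
      |laplacian (rescale c g) z| = (c ^ 2)⁻¹ * rescale c (|laplacian g ·|) z := by
    have hdef : rescale c g = fun w ↦ (c ^ finrank ℝ ℂ)⁻¹ * g (c⁻¹ • w) := rfl
    rw [hdef, laplacian_const_mul _ fun w ↦ g (c⁻¹ • w), laplacian_comp_smul, mul_left_comm,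
      abs_mul, abs_mul, abs_of_pos (by positivity : 0 < c⁻¹ ^ 2),
      abs_of_pos (by positivity : 0 < (c ^ finrank ℝ ℂ)⁻¹), inv_pow]
    rfl
  simp_rw [hlaplacian]
  rw [integral_const_mul, integral_rescale _ hc, inv_mul_eq_div]

theorem exists_isMollifier_integral_abs_laplacian_le :
    ∃ K : ℝ, 0 < K ∧ ∀ s, 0 < s →
      ∃ g : ℂ → ℝ, IsMollifier volume g s ∧ ∫ z, |laplacian g z| ≤ K / s ^ 2 := by
  obtain ⟨g, hg⟩ := exists_isMollifier_one (volume : Measure ℂ)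
  refine ⟨(∫ z, |laplacian g z|) + 1, by positivity, fun s hs ↦
    ⟨rescale s g, by simpa only [mul_one] using hg.rescale hs, ?_⟩⟩
  rw [integral_abs_laplacian_rescale g hs]
  gcongr
  exact le_add_of_nonneg_right zero_le_one

end Mollifier

section Transport

/-- `Δu = μ - ν` in the sense of distributions. Local integrability of `u` is part of the notion,
as the Bochner integral of `u * Δφ` has the junk value `0` when `u * Δφ` is not integrable. -/
structure HasDistribLaplacian (u : ℂ → ℝ) (μ ν : Measure ℂ) : Prop where
  locallyIntegrable : LocallyIntegrable u
  integral_mul_laplacian : ∀ φ : ℂ → ℝ, ContDiff ℝ ∞ φ → HasCompactSupport φ →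
    ∫ z, u z * laplacian φ z = (∫ z, φ z ∂μ) - ∫ z, φ z ∂ν

namespace HasDistribLaplacian

variable {u g : ℂ → ℝ} {μ : Measure ℂ} {M s : ℝ} {E : Set ℂ}

theorem abs_integral_indicator_convolution_sub_le (hΔ : HasDistribLaplacian u μ volume)
    (hu : ∀ᵐ z, |u z| ≤ M) (hg : IsMollifier volume g s) (hM : M * ∫ z, |laplacian g z| ≤ 1)
    {X Y Z : Set ℂ} (hX : MeasurableSet X) (hY : MeasurableSet Y) (hZ : MeasurableSet Z)
    (hXZ : X ⊆ Z) (hZY : Z ⊆ Y) (hXY : cthickening (2 * s) X ⊆ Y) (hYb : Bornology.IsBounded Y) :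
    |(∫ z, (Z.indicator 1 ⋆ g) z ∂μ) - volume.real Z| ≤ volume.real (Y \ X) := by
  have hM₀ : 0 ≤ M := let ⟨z, hz⟩ := hu.exists; (abs_nonneg (u z)).trans hz
  have hφ := hg.contDiff_indicator_convolution hZ
  have hφ' := hg.hasCompactSupport_indicator_convolution (hYb.subset hZY)
  have hΔg : Continuous (laplacian g) := (contDiff_laplacian hg.contDiff).continuous
  have hΔg_support : support (laplacian g) ⊆ closedBall 0 s :=
    support_laplacian_subset.trans (closure_minimal hg.support_subset isClosed_closedBall)
  have hΔφ : Integrable (laplacian (Z.indicator 1 ⋆ g)) :=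
    (contDiff_laplacian hφ).continuous.integrable_of_hasCompactSupport
      (hφ'.mono' support_laplacian_subset)
  calc |(∫ z, (Z.indicator 1 ⋆ g) z ∂μ) - volume.real Z|
      = ‖∫ z, u z * laplacian (Z.indicator 1 ⋆ g) z‖ := by
        rw [hΔ.integral_mul_laplacian _ hφ hφ', hg.integral_indicator_convolution hZ
          (hYb.subset hZY), Real.norm_eq_abs]
    _ ≤ ∫ z, M * |laplacian (Z.indicator 1 ⋆ g) z| :=
        norm_integral_le_of_norm_le (hΔφ.abs.const_mul M) <| hu.mono fun z hz ↦ by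
          rw [norm_mul]
          exact mul_le_mul_of_nonneg_right hz (abs_nonneg _)
    _ = M * ∫ z, |(Z.indicator 1 ⋆ laplacian g) z| := by
        rw [integral_const_mul, laplacian_convolution (locallyIntegrable_indicator_one hZ)
          hg.contDiff hg.hasCompactSupport]
    _ ≤ M * (volume.real (Y \ X) * ∫ z, |laplacian g z|) := by
        gcongr
        exact integral_abs_indicator_convolution_le hX hY hZ hXZ hZY hXY hYb hΔg hΔg_support
          (integral_laplacian_eq_zero hg.contDiff hg.hasCompactSupport)
    _ = volume.real (Y \ X) * (M * ∫ z, |laplacian g z|) := mul_left_comm ..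
    _ ≤ volume.real (Y \ X) := mul_le_of_le_one_right measureReal_nonneg hM

theorem measure_le_volume_cthickening [IsFiniteMeasureOnCompacts μ]
    (hΔ : HasDistribLaplacian u μ volume) (hu : ∀ᵐ z, |u z| ≤ M)
    (hg : IsMollifier volume g s) (hM : M * ∫ z, |laplacian g z| ≤ 1)
    (hE : Bornology.IsBounded E) : μ E ≤ volume (cthickening (3 * s) E) := by
  have hs : 0 ≤ s := hg.radius_nonneg
  set Z := cthickening s E
  set Y := cthickening (3 * s) E
  have hZ : MeasurableSet Z := isClosed_cthickening.measurableSet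
  have hY : MeasurableSet Y := isClosed_cthickening.measurableSet
  have hZY : Z ⊆ Y := cthickening_mono (by linarith) E
  have hZY' : cthickening (2 * s) Z ⊆ Y :=
    (cthickening_cthickening_subset (by positivity) hs E).trans
      (cthickening_mono (by linarith) E)
  have herror := hΔ.abs_integral_indicator_convolution_sub_le hu hg hM hZ hY hZ subset_rfl hZY
    hZY' hE.cthickening
  rw [measureReal_sdiff hZY hZ hE.cthickening.measure_lt_top.ne] at herror
  calc μ E ≤ ENNReal.ofReal (∫ z, (Z.indicator 1 ⋆ g) z ∂μ) :=
        hg.measure_le_integral_indicator_convolution hZ hE.cthickening subset_rfl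
    _ ≤ ENNReal.ofReal (volume.real Y) :=
        ENNReal.ofReal_le_ofReal (by linarith [le_of_abs_le herror])
    _ = volume Y := ofReal_measureReal hE.cthickening.measure_lt_top.ne

theorem volume_le_measure_cthickening (hΔ : HasDistribLaplacian u μ volume)
    (hu : ∀ᵐ z, |u z| ≤ M) (hg : IsMollifier volume g s)
    (hM : M * ∫ z, |laplacian g z| ≤ 1) (hE : MeasurableSet E) (hEb : Bornology.IsBounded E) :
    volume E ≤ μ (cthickening (3 * s) E) := by
  have hs : 0 ≤ s := hg.radius_nonneg
  set Z := cthickening (2 * s) E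
  have hZ : MeasurableSet Z := isClosed_cthickening.measurableSet
  have hEZ : E ⊆ Z := self_subset_cthickening E
  have herror := hΔ.abs_integral_indicator_convolution_sub_le hu hg hM hE hZ hZ hEZ subset_rfl
    subset_rfl hEb.cthickening
  rw [measureReal_sdiff hEZ hE hEb.cthickening.measure_lt_top.ne] at herror
  calc volume E = ENNReal.ofReal (volume.real E) :=
        (ofReal_measureReal hEb.measure_lt_top.ne).symm
    _ ≤ ENNReal.ofReal (∫ z, (Z.indicator 1 ⋆ g) z ∂μ) :=
        ENNReal.ofReal_le_ofReal (by linarith [neg_le_of_abs_le herror])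
    _ ≤ μ (cthickening s Z) := hg.integral_indicator_convolution_le_measure μ hZ
    _ ≤ μ (cthickening (3 * s) E) := measure_mono <|
        (cthickening_cthickening_subset hs (by positivity) E).trans
          (cthickening_mono (by linarith) E)

end HasDistribLaplacian

theorem SubharmonicOn.measurable {v : ℂ → ℝ} (hv : SubharmonicOn v univ) : Measurable v :=
  (upperSemicontinuousOn_univ_iff.1 hv.1).measurable

theorem transport_of_bounded_delta_subharmonic_general :
    ∃ C : ℝ, 0 < C ∧
      ∀ (u : ℂ → ℝ) (μ : Measure ℂ), IsLocallyFiniteMeasure μ →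
        ∀ M : ℝ, (∀ᵐ z, |u z| ≤ M) → HasDistribLaplacian u μ volume →
          ∀ E : Set ℂ,
            μ E ≤ volume (cthickening (C * M ^ (1/2 : ℝ)) E) ∧
            volume E ≤ μ (cthickening (C * M ^ (1/2 : ℝ)) E) := by
  obtain ⟨K, hK, hmollifier⟩ := exists_isMollifier_integral_abs_laplacian_le
  refine ⟨3 * √K, by positivity, fun u μ _ M hu hΔ E ↦ ?_⟩
  have hM : 0 ≤ M := let ⟨z, hz⟩ := hu.exists; (abs_nonneg (u z)).trans hz
  -- Only radii `r > 3 √(K M)` are treated, since no mollifier has radius `0` when `M = 0`.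
  have hscale {r : ℝ} (hr : 3 * √K * M ^ (1/2 : ℝ) < r) :
      ∃ g, IsMollifier volume g (r / 3) ∧ M * ∫ z, |laplacian g z| ≤ 1 := by
    rw [← Real.sqrt_eq_rpow, mul_assoc, ← Real.sqrt_mul hK.le, ← lt_div_iff₀' three_pos] at hr
    have hr₀ : 0 < r / 3 := (Real.sqrt_nonneg _).trans_lt hr
    obtain ⟨g, hg, hgK⟩ := hmollifier (r / 3) hr₀
    refine ⟨g, hg, (mul_le_mul_of_nonneg_left hgK hM).trans ?_⟩
    rw [← mul_div_assoc, mul_comm, div_le_one (by positivity)]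
    exact ((Real.sqrt_lt' hr₀).1 hr).le
  constructor
  · refine measure_le_cthickening_of_forall_isCompact (fun F hF ↦
      le_measure_cthickening_of_forall_gt hF.isBounded fun r hr ↦ ?_) E
    obtain ⟨g, hg, hgM⟩ := hscale hr
    simpa only [mul_div_cancel₀ r three_ne_zero] using
      hΔ.measure_le_volume_cthickening hu hg hgM hF.isBounded
  · refine measure_le_cthickening_of_forall_isCompact (fun F hF ↦
      le_measure_cthickening_of_forall_gt hF.isBounded fun r hr ↦ ?_) E
    obtain ⟨g, hg, hgM⟩ := hscale hr
    simpa only [mul_div_cancel₀ r three_ne_zero] using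
      hΔ.volume_le_measure_cthickening hu hg hgM hF.measurableSet hF.isBounded

end Transport

/-- Transportation lemma: if `u` is a bounded delta-subharmonic function on `ℂ`
with distributional Laplacian `Δu = μ - m` (`μ` a non-negative locally finite
measure, `m` Lebesgue area measure), then, with `t = C ‖u‖_∞^{1/2}` for an
absolute constant `C`, for every bounded Borel set `E ⊆ ℂ` one has
`μ(E) ≤ m(E_{+t})` and `m(E) ≤ μ(E_{+t})`. -/
theorem transport_of_bounded_delta_subharmonic :
    ∃ C : ℝ, 0 < C ∧
      ∀ (u v w : ℂ → ℝ) (μ : Measure ℂ), IsLocallyFiniteMeasure μ →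
        SubharmonicOn v Set.univ → SubharmonicOn w Set.univ →
        (∀ z, u z = v z - w z) →
        ∀ M : ℝ, (∀ z, |u z| ≤ M) →
        (∀ φ : ℂ → ℝ, ContDiff ℝ (⊤ : ℕ∞) φ → HasCompactSupport φ →
          ∫ z, u z * laplacian φ z = (∫ z, φ z ∂μ) - ∫ z, φ z) →
        ∀ E : Set ℂ, MeasurableSet E → Bornology.IsBounded E →
          μ E ≤ volume (cthickening (C * M ^ (1/2 : ℝ)) E) ∧
          volume E ≤ μ (cthickening (C * M ^ (1/2 : ℝ)) E) := by
  obtain ⟨C, hC, htransport⟩ := transport_of_bounded_delta_subharmonic_general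
  refine ⟨C, hC, fun u v w μ hμ hv hw huvw M hM hΔ E _ _ ↦ ?_⟩
  have hu : Measurable u := (funext huvw : u = v - w) ▸ hv.measurable.sub hw.measurable
  have hloc : LocallyIntegrable u :=
    (memLp_top_of_bound hu.aestronglyMeasurable M (.of_forall hM)).locallyIntegrable le_top
  exact htransport u μ hμ M (.of_forall hM) ⟨hloc, hΔ⟩ E
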